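/- Let α > 0, Λ > 1, ε ∈ (0,1), K ≥ 1, L > 0 and m ∈ ℕ. Let x₁, …, x_K ∈ ℝ^d be points such that every cluster at scale Lε contains at least two elements, and let (X₁, …, X_K) be centered jointly Gaussian real random variables whose covariance R(i,j) := E(X_i X_j) satisfies R(i,j) ≥ ε^α/(Λ(|x_i−x_j|_s+ε)^α) and R(i,j) ≤ Λε^α/(|x_i−x_j|_s+ε)^α for all i, j. Then (Λ(KL+1)^α)^{−⌊(m+1)/2⌋·K} ≤ E ∏_{j=1}^{K} (X_j^{⋄m} + X_j^{⋄(m+1)}). -/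

import Mathlib

open MeasureTheory ProbabilityTheory Filter

noncomputable section

def anorm {d : ℕ} (s : Fin d → ℝ) (x : Fin d → ℝ) : ℝ :=
  ∑ j, |x j| ^ (1 / s j)

def IsCenteredGaussianFamily {Ω ι : Type*} [MeasurableSpace Ω] (P : Measure Ω)
    (X : ι → Ω → ℝ) : Prop :=
  ∀ (A : Finset ι) (c : ι → ℝ), ∃ v : NNReal,
    Measure.map (fun ω => ∑ i ∈ A, c i * X i ω) P = gaussianReal 0 v

def wick (v : ℝ) (n : ℕ) (x : ℝ) : ℝ :=
  Real.sqrt v ^ n * Polynomial.aeval (x / Real.sqrt v) (Polynomial.hermite n)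

def SameCluster {d K : ℕ} (s : Fin d → ℝ) (δ : ℝ) (x : Fin K → Fin d → ℝ) :
    Fin K → Fin K → Prop :=
  Relation.ReflTransGen fun i j => anorm s (x i - x j) ≤ δ

open Polynomial in
/-- A polynomial in a random variable with moments of all orders has moments of all orders. -/
theorem memLp_eval_of_forall_memLp {Ω : Type*} [MeasurableSpace Ω] {P : Measure Ω}
    [IsProbabilityMeasure P] {Y : Ω → ℝ} (hY : ∀ p : NNReal, MemLp Y p P) (f : ℝ[X])
    (p : NNReal) : MemLp (fun ω => f.eval (Y ω)) p P := by
  have hpow : ∀ (n : ℕ) (p : NNReal), MemLp (fun ω => Y ω ^ n) p P := by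
    intro n
    induction n with
    | zero => intro p; simpa using memLp_const (1 : ℝ)
    | succ n ih =>
      intro p
      have h := (hY (2 * p)).mul' (ih (2 * p)) (r := (p : ENNReal)) (hpqr := ⟨by
        rw [ENNReal.coe_mul, ENNReal.mul_inv (by simp) (by simp), ← add_mul]
        simp [ENNReal.inv_two_add_inv_two]⟩)
      simpa [pow_succ] using h
  induction f using Polynomial.induction_on' with
  | add f g hf hg =>
    simp only [eval_add]
    exact hf.add hg
  | monomial n a => simpa using (hpow n p).const_mul a

open Polynomial in
/-- Products of polynomials in random variables with moments of all orders are integrable. -/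
theorem integrable_prod_eval {Ω ι : Type*} [MeasurableSpace Ω] {P : Measure Ω}
    [IsProbabilityMeasure P] {Y : ι → Ω → ℝ} (hY : ∀ i (p : NNReal), MemLp (Y i) p P)
    (A : Finset ι) (f : ι → ℝ[X]) :
    Integrable (fun ω => ∏ i ∈ A, (f i).eval (Y i ω)) P := by
  rcases A.eq_empty_or_nonempty with rfl | hA
  · simp
  have h := MemLp.prod' (μ := P) (s := A) (f := fun i ω => (f i).eval (Y i ω))
    (p := fun _ => ((A.card : NNReal) : ENNReal))
    (fun i _ => memLp_eval_of_forall_memLp (hY i) (f i) _)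
  rw [← memLp_one_iff_integrable]
  convert h using 1
  have : (A.card : ENNReal) ≠ 0 := by simpa using hA.ne_empty
  simp [ENNReal.mul_inv_cancel this]

open Polynomial in
theorem integrable_eval_gaussianReal (v : NNReal) (f : ℝ[X]) :
    Integrable (fun x => f.eval x) (gaussianReal 0 v) := by
  have := memLp_eval_of_forall_memLp (fun p => memLp_id_gaussianReal (μ := 0) (v := v) p) f 1
  simpa [memLp_one_iff_integrable] using this

open Polynomial in
/-- Integration by parts for a centered Gaussian measure on the line. -/
theorem integral_mul_eval_gaussianReal (v : NNReal) (hv : v ≠ 0) (f : ℝ[X]) :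
    ∫ x, x * f.eval x ∂gaussianReal 0 v = v * ∫ x, (derivative f).eval x ∂gaussianReal 0 v := by
  have hv' : (v : ℝ) ≠ 0 := by exact_mod_cast hv
  have hintegrable : ∀ g : ℝ[X], Integrable (fun x => gaussianPDFReal 0 v x * g.eval x) := by
    intro g
    have h := integrable_eval_gaussianReal v g
    rw [gaussianReal_of_var_ne_zero _ hv, integrable_withDensity_iff_integrable_smul'
      (measurable_gaussianPDF _ _) (ae_of_all _ fun _ => gaussianPDF_lt_top)] at h
    simpa [toReal_gaussianPDF] using h
  have hpdf : ∀ x, HasDerivAt (gaussianPDFReal 0 v) (-(x / v) * gaussianPDFReal 0 v x) x := by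
    intro x
    rw [gaussianPDFReal_def]
    have h1 : HasDerivAt (fun y : ℝ => -(y - 0) ^ 2 / (2 * (v : ℝ))) (-(x / v)) x := by
      have := (((hasDerivAt_id x).sub_const 0).pow 2).neg.div_const (2 * (v : ℝ))
      refine this.congr_deriv ?_
      simp
      field_simp
    exact (h1.exp.const_mul _).congr_deriv (by ring)
  have hderiv : ∀ x, HasDerivAt (fun x => gaussianPDFReal 0 v x * f.eval x)
      (gaussianPDFReal 0 v x * (derivative f - C (v : ℝ)⁻¹ * (X * f)).eval x) x := by
    intro x
    refine ((hpdf x).mul (f.hasDerivAt x)).congr_deriv ?_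
    simp only [eval_sub, eval_mul, eval_C, eval_X]
    ring
  have h0 := integral_eq_zero_of_hasDerivAt_of_integrable hderiv (hintegrable _) (hintegrable f)
  have h1 : ∫ x, (derivative f - C (v : ℝ)⁻¹ * (X * f)).eval x ∂gaussianReal 0 v = 0 := by
    rw [integral_gaussianReal_eq_integral_smul hv]
    simpa using h0
  have h2 := integrable_eval_gaussianReal v (derivative f)
  have h3 := integrable_eval_gaussianReal v (X * f)
  simp only [eval_sub, eval_mul, eval_C, eval_X] at h1 h3
  rw [integral_sub h2 (h3.const_mul _), integral_const_mul] at h1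
  field_simp at h1
  linarith

namespace IsCenteredGaussianFamily

variable {Ω ι : Type*} [MeasurableSpace Ω] {P : Measure Ω}
  {X : ι → Ω → ℝ}

theorem exists_map_eq (hX : IsCenteredGaussianFamily P X) (i : ι) :
    ∃ v : NNReal, P.map (X i) = gaussianReal 0 v := by
  obtain ⟨v, hv⟩ := hX {i} (fun _ => 1)
  exact ⟨v, by simpa using hv⟩

theorem aemeasurable (hX : IsCenteredGaussianFamily P X) (i : ι) : AEMeasurable (X i) P := by
  obtain ⟨v, hv⟩ := hX.exists_map_eq i
  exact AEMeasurable.of_map_ne_zero (by rw [hv]; exact IsProbabilityMeasure.ne_zero _)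

theorem memLp (hX : IsCenteredGaussianFamily P X) (i : ι) (p : NNReal) : MemLp (X i) p P := by
  obtain ⟨v, hv⟩ := hX.exists_map_eq i
  have h := memLp_id_gaussianReal (μ := 0) (v := v) p
  rw [← hv] at h
  exact h.comp_of_map (hX.aemeasurable i)

theorem integral_eq_zero (hX : IsCenteredGaussianFamily P X) (i : ι) : ∫ ω, X i ω ∂P = 0 := by
  obtain ⟨v, hv⟩ := hX.exists_map_eq i
  have h := integral_id_gaussianReal (μ := 0) (v := v)
  rwa [← hv, integral_map (hX.aemeasurable i) (by fun_prop)] at h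

theorem map_eq [IsProbabilityMeasure P] (hX : IsCenteredGaussianFamily P X) (i : ι) :
    P.map (X i) = gaussianReal 0 (∫ ω, X i ω * X i ω ∂P).toNNReal := by
  obtain ⟨v, hv⟩ := hX.exists_map_eq i
  have h := variance_id_gaussianReal (μ := 0) (v := v)
  rw [← hv, variance_map (by fun_prop) (hX.aemeasurable i), Function.id_comp,
    variance_of_integral_eq_zero (hX.aemeasurable i) (hX.integral_eq_zero i)] at h
  simp only [← sq, h, hv, Real.toNNReal_coe]

theorem hasGaussianLaw [Fintype ι] (hX : IsCenteredGaussianFamily P X) :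
    HasGaussianLaw (fun ω i => X i ω) P := by
  classical
  have hm : AEMeasurable (fun ω i => X i ω) P := aemeasurable_pi_lambda _ hX.aemeasurable
  refine ⟨isGaussian_of_map_eq_gaussianReal fun L => ?_⟩
  obtain ⟨v, hv⟩ := hX Finset.univ (fun i => L (Pi.single i 1))
  refine ⟨0, v, ?_⟩
  rw [AEMeasurable.map_map_of_aemeasurable (by fun_prop) hm, ← hv]
  congr 1
  ext ω
  simp only [Function.comp_apply]
  conv_lhs => rw [pi_eq_sum_univ' (fun i => X i ω)]
  simp [mul_comm, map_sum]

/-- The residual of a Gaussian family after regression on one member is independent of it. -/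
theorem indepFun_residual [IsProbabilityMeasure P] [Fintype ι]
    (hX : IsCenteredGaussianFamily P X) (i : ι)
    (hv : ∫ ω, X i ω * X i ω ∂P ≠ 0) :
    IndepFun (X i) (fun ω j => X j ω -
      (∫ ω, X i ω * X j ω ∂P) / (∫ ω, X i ω * X i ω ∂P) * X i ω) P := by
  set a : ι → ℝ := fun j => (∫ ω, X i ω * X j ω ∂P) / (∫ ω, X i ω * X i ω ∂P) with ha
  have hG : HasGaussianLaw (fun ω => ((fun _ : Unit => X i ω), fun j => X j ω - a j * X i ω)) P :=
    hX.hasGaussianLaw.map_fun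
      ((ContinuousLinearMap.pi fun _ : Unit => ContinuousLinearMap.proj (R := ℝ)
          (φ := fun _ : ι => ℝ) i).prod
        (ContinuousLinearMap.pi fun j => ContinuousLinearMap.proj (R := ℝ)
          (φ := fun _ : ι => ℝ) j - a j • ContinuousLinearMap.proj (R := ℝ)
          (φ := fun _ : ι => ℝ) i))
  have hL2 : ∀ j, MemLp (X j) 2 P := fun j => by simpa using hX.memLp j 2
  have hcov : ∀ j k, cov[X j, X k; P] = ∫ ω, X j ω * X k ω ∂P := by
    intro j k
    rw [covariance_eq_sub (hL2 j) (hL2 k)]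
    simp [hX.integral_eq_zero]
  have hind := hG.indepFun_of_covariance_eval (X := fun _ : Unit => X i)
    (Y := fun j ω => X j ω - a j * X i ω) (fun _ j => by
      rw [covariance_fun_sub_right (hL2 i) (hL2 j) ((hL2 i).const_mul _),
        covariance_const_mul_right, hcov, hcov, ha, div_mul_cancel₀ _ hv, sub_self])
  exact hind.comp (φ := fun f : Unit → ℝ => f ()) (ψ := id) (by fun_prop) measurable_id

open Polynomial in
/-- Gaussian integration by parts for products of polynomials in the members of the family. -/
theorem integral_mul_prod_eval [IsProbabilityMeasure P] [Fintype ι] [DecidableEq ι]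
    (hX : IsCenteredGaussianFamily P X) (i : ι) (hv : 0 < ∫ ω, X i ω * X i ω ∂P) (f : ι → ℝ[X]) :
    ∫ ω, X i ω * ∏ j, (f j).eval (X j ω) ∂P =
      ∑ j, (∫ ω, X i ω * X j ω ∂P) *
        ∫ ω, (∏ k ∈ Finset.univ.erase j, (f k).eval (X k ω)) *
          (derivative (f j)).eval (X j ω) ∂P := by
  set v := ∫ ω, X i ω * X i ω ∂P with hvdef
  set a : ι → ℝ := fun j => (∫ ω, X i ω * X j ω ∂P) / v with ha
  set Y : Ω → ι → ℝ := fun ω j => X j ω - a j * X i ω with hY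
  have hind : IndepFun (X i) Y P := hX.indepFun_residual i hv.ne'
  have hXm := hX.aemeasurable i
  have hYm : AEMeasurable Y P :=
    aemeasurable_pi_lambda _ fun j => (hX.aemeasurable j).sub (hXm.const_mul _)
  have hlaw := (indepFun_iff_map_prod_eq_prod_map_map hXm hYm).1 hind
  rw [hX.map_eq i] at hlaw
  have hY' := Measure.isProbabilityMeasure_map hYm
  -- Fubini on the product of the laws of `X i` and `Y`.
  have hfub : ∀ g : ℝ × (ι → ℝ) → ℝ, Measurable g → Integrable (fun ω => g (X i ω, Y ω)) P →
      ∫ ω, g (X i ω, Y ω) ∂P = ∫ y, ∫ x, g (x, y) ∂gaussianReal 0 v.toNNReal ∂P.map Y := by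
    intro g hg hgi
    have hi : Integrable g (P.map fun ω => (X i ω, Y ω)) :=
      (integrable_map_measure hg.aestronglyMeasurable (hXm.prodMk hYm)).2 hgi
    rw [← integral_map (hXm.prodMk hYm) hg.aestronglyMeasurable, hlaw]
    rw [hlaw] at hi
    exact integral_prod_symm _ hi
  have hdecomp : ∀ ω j, a j * X i ω + Y ω j = X j ω := fun ω j => by simp [hY]
  have hintegrable : ∀ g : ι → ℝ[X], Integrable (fun ω => ∏ j, (g j).eval (X j ω)) P :=
    fun g => integrable_prod_eval hX.memLp _ g
  have hmeas : ∀ g : ι → ℝ[X], Measurable fun z : ℝ × (ι → ℝ) =>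
      ∏ j, (g j).eval (a j * z.1 + z.2 j) := fun g =>
    Finset.measurable_prod _ fun j _ => (g j).continuous.measurable.comp (by fun_prop)
  have hmul : ∀ (g : ι → ℝ) (j : ι) (c : ℝ),
      (∏ k ∈ Finset.univ.erase j, g k) * c = ∏ k, Function.update g j c k := by
    intro g j c
    rw [Finset.prod_update_of_mem (Finset.mem_univ j), mul_comm, Finset.sdiff_singleton_eq_erase]
  have hupd : ∀ (j : ι) (p : ℝ[X]) (y : ι → ℝ),
      (∏ k ∈ Finset.univ.erase j, (f k).eval (y k)) * p.eval (y j) =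
        ∏ k, (Function.update f j p k).eval (y k) := by
    intro j p y
    rw [hmul (fun k => (f k).eval (y k))]
    refine Finset.prod_congr rfl fun k _ => ?_
    rcases eq_or_ne k j with rfl | h
    · simp
    · simp [h]
  have hcons : ∀ y : ι → ℝ, y i * ∏ j, (f j).eval (y j) =
      ∏ k, (Function.update f i (Polynomial.X * f i) k).eval (y k) := by
    intro y
    rw [← hupd, ← Finset.mul_prod_erase _ _ (Finset.mem_univ i), eval_mul, eval_X]
    ring
  have hline : ∀ (y : ι → ℝ), ∫ x, x * ∏ j, (f j).eval (a j * x + y j) ∂gaussianReal 0 v.toNNReal =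
      ∫ x, ∑ j, (∫ ω, X i ω * X j ω ∂P) *
        ∏ k, (Function.update f j (derivative (f j)) k).eval (a k * x + y k)
          ∂gaussianReal 0 v.toNNReal := by
    intro y
    have h := integral_mul_eval_gaussianReal v.toNNReal (by simpa using hv)
      (∏ j, (f j).comp (C (a j) * Polynomial.X + C (y j)))
    simp only [eval_prod, eval_comp, eval_add, eval_mul, eval_C, eval_X] at h
    rw [h, Real.coe_toNNReal _ hv.le, ← integral_const_mul]
    congr 1
    ext x
    rw [derivative_prod_finset, eval_finsetSum, Finset.mul_sum]
    refine Finset.sum_congr rfl fun j _ => ?_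
    rw [← hupd j (derivative (f j)) (fun k => a k * x + y k), derivative_comp]
    have haj : v * a j = ∫ ω, X i ω * X j ω ∂P := mul_div_cancel₀ _ hv.ne'
    simp only [eval_mul, eval_prod, eval_comp, eval_add, eval_C, eval_X, derivative_add,
      derivative_C_mul, derivative_X, derivative_C, mul_one, add_zero, ← haj]
    ring
  have hleft := hfub (fun z => z.1 * ∏ j, (f j).eval (a j * z.1 + z.2 j))
    (measurable_fst.mul (hmeas f)) (by
      simp only [hdecomp]
      exact (hintegrable (Function.update f i (Polynomial.X * f i))).congr
        (ae_of_all _ fun ω => (hcons fun j => X j ω).symm))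
  have hright := hfub (fun z => ∑ j, (∫ ω, X i ω * X j ω ∂P) *
      ∏ k, (Function.update f j (derivative (f j)) k).eval (a k * z.1 + z.2 k))
    (Finset.measurable_sum _ fun j _ => (hmeas _).const_mul _) (by
      simp only [hdecomp]
      exact integrable_finsetSum _ fun j _ => (hintegrable _).const_mul _)
  simp only [hdecomp] at hleft hright
  simp only [hline] at hleft
  rw [hleft, ← hright, integral_finsetSum _ fun j _ => (hintegrable _).const_mul _]
  refine Finset.sum_congr rfl fun j _ => ?_
  rw [integral_const_mul]
  simp only [hupd j _ (fun k => X k _)]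

end IsCenteredGaussianFamily

section Wick

open Polynomial

theorem derivative_hermite_succ (n : ℕ) :
    derivative (hermite (n + 1)) = (n + 1 : ℤ[X]) * hermite n := by
  induction n with
  | zero => simp [hermite_succ]
  | succ n ih =>
    rw [hermite_succ (n + 1), derivative_sub, derivative_mul, ih, derivative_mul, derivative_X]
    have h : derivative ((n : ℤ[X]) + 1) = 0 := by simp
    rw [h]
    push_cast
    linear_combination (-(n + 1 : ℤ[X])) * hermite_succ n

/-- The polynomial whose evaluation is the Wick power of a Gaussian variable of variance `v`. -/
def wickPoly (v : ℝ) (n : ℕ) : ℝ[X] :=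
  C (√v ^ n) * ((hermite n).map (Int.castRingHom ℝ)).comp (C (√v)⁻¹ * X)

theorem wick_eq_eval (v : ℝ) (n : ℕ) (x : ℝ) : wick v n x = (wickPoly v n).eval x := by
  simp [wick, wickPoly, eval_comp, eval_map, aeval_def, div_eq_inv_mul]

theorem wickPoly_zero (v : ℝ) : wickPoly v 0 = 1 := by
  simp [wickPoly]

theorem wickPoly_succ {v : ℝ} (hv : 0 < v) (n : ℕ) :
    wickPoly v (n + 1) = X * wickPoly v n - C v * derivative (wickPoly v n) := by
  have hs : √v ≠ 0 := (Real.sqrt_pos.2 hv).ne'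
  refine Polynomial.funext fun x => ?_
  simp only [wickPoly, hermite_succ, Polynomial.map_sub, Polynomial.map_mul, map_X, sub_comp,
    mul_comp, X_comp, derivative_mul, derivative_C, derivative_comp, derivative_map, derivative_X,
    eval_mul, eval_sub, eval_add, eval_C, eval_X, eval_zero, eval_one]
  have hsq : √v ^ 2 = v := Real.sq_sqrt hv.le
  generalize √v = r at hs hsq ⊢
  subst hsq
  field_simp
  ring

theorem derivative_wickPoly {v : ℝ} (hv : 0 < v) (n : ℕ) :
    derivative (wickPoly v n) = C (n : ℝ) * wickPoly v (n - 1) := by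
  have hs : √v ≠ 0 := (Real.sqrt_pos.2 hv).ne'
  cases n with
  | zero => simp [wickPoly_zero]
  | succ n =>
    refine Polynomial.funext fun x => ?_
    simp only [wickPoly, derivative_mul, derivative_C, derivative_comp, derivative_map,
      derivative_hermite_succ, derivative_X, eval_mul, eval_add, eval_C, eval_X, eval_zero,
      eval_one, Polynomial.map_mul, Polynomial.map_add, Polynomial.map_natCast, Polynomial.map_one,
      mul_comp, add_comp, natCast_comp, one_comp, eval_natCast, Nat.add_sub_cancel]
    push_cast
    field_simp
    ring

end Wick

/-- The expectation of the product of the Wick powers `X j ^ {⋄ n j}`. -/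
def wickMoment {Ω ι : Type*} [MeasurableSpace Ω] [Fintype ι] (P : Measure Ω) (X : ι → Ω → ℝ)
    (n : ι → ℕ) : ℝ :=
  ∫ ω, ∏ j, wick (∫ ω', X j ω' * X j ω' ∂P) (n j) (X j ω) ∂P

namespace IsCenteredGaussianFamily

variable {Ω ι : Type*} [MeasurableSpace Ω] {P : Measure Ω} [IsProbabilityMeasure P]
  {X : ι → Ω → ℝ} [Fintype ι]

theorem integrable_prod_wick (hX : IsCenteredGaussianFamily P X) (v : ι → ℝ) (n : ι → ℕ) :
    Integrable (fun ω => ∏ j, wick (v j) (n j) (X j ω)) P := by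
  simp only [wick_eq_eval]
  exact integrable_prod_eval hX.memLp _ _

variable [DecidableEq ι]

open Polynomial in
/-- The recursion that contracts one leg at `i` with the legs at all other points. -/
theorem wickMoment_add_single (hX : IsCenteredGaussianFamily P X)
    (hv : ∀ i, 0 < ∫ ω, X i ω * X i ω ∂P) (n : ι → ℕ) (i : ι) :
    wickMoment P X (n + Pi.single i 1) =
      ∑ j ∈ Finset.univ.erase i, n j * (∫ ω, X i ω * X j ω ∂P) *
        wickMoment P X (n - Pi.single j 1) := by
  let v : ι → ℝ := fun j => ∫ ω, X j ω * X j ω ∂P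
  have hv' : ∀ j, 0 < v j := hv
  have hmoment : ∀ m : ι → ℕ, wickMoment P X m =
      ∫ ω, ∏ k, (wickPoly (v k) (m k)).eval (X k ω) ∂P := fun m => by
    simp only [wickMoment, wick_eq_eval, v]
  simp only [hmoment]
  have hibp := hX.integral_mul_prod_eval i (hv i) (fun j => wickPoly (v j) (n j))
  have hterm : ∀ j ω, (∏ k ∈ Finset.univ.erase j, (wickPoly (v k) (n k)).eval (X k ω)) *
      (derivative (wickPoly (v j) (n j))).eval (X j ω) =
      n j * ∏ k, (wickPoly (v k) ((n - Pi.single j 1 : ι → ℕ) k)).eval (X k ω) := by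
    intro j ω
    rw [derivative_wickPoly (hv' j), ← Finset.mul_prod_erase _ _ (Finset.mem_univ j), eval_mul,
      eval_C]
    have : ∏ k ∈ Finset.univ.erase j,
        (wickPoly (v k) ((n - Pi.single j 1 : ι → ℕ) k)).eval (X k ω) =
        ∏ k ∈ Finset.univ.erase j, (wickPoly (v k) (n k)).eval (X k ω) :=
      Finset.prod_congr rfl fun k hk => by simp [Finset.ne_of_mem_erase hk]
    rw [this]
    simp
    ring
  have hexp : ∀ ω, ∏ j, (wickPoly (v j) ((n + Pi.single i 1 : ι → ℕ) j)).eval (X j ω) =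
      X i ω * (∏ j, (wickPoly (v j) (n j)).eval (X j ω)) -
        v i * (n i * ∏ k, (wickPoly (v k) ((n - Pi.single i 1 : ι → ℕ) k)).eval (X k ω)) := by
    intro ω
    rw [← hterm i ω, ← Finset.mul_prod_erase _ _ (Finset.mem_univ i),
      ← Finset.mul_prod_erase Finset.univ (fun j => (wickPoly (v j) (n j)).eval (X j ω))
        (Finset.mem_univ i)]
    have : ∏ k ∈ Finset.univ.erase i,
        (wickPoly (v k) ((n + Pi.single i 1 : ι → ℕ) k)).eval (X k ω) =
        ∏ k ∈ Finset.univ.erase i, (wickPoly (v k) (n k)).eval (X k ω) :=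
      Finset.prod_congr rfl fun k hk => by simp [Finset.ne_of_mem_erase hk]
    rw [this]
    simp only [Pi.add_apply, Pi.single_eq_same, wickPoly_succ (hv' i), eval_sub, eval_mul, eval_X,
      eval_C]
    ring
  have hintegrable : ∀ m : ι → ℕ, Integrable (fun ω => ∏ k, (wickPoly (v k) (m k)).eval (X k ω)) P :=
    fun m => integrable_prod_eval hX.memLp _ _
  have hintegrable_mul : Integrable (fun ω => X i ω * ∏ j, (wickPoly (v j) (n j)).eval (X j ω)) P := by
    refine ((hintegrable (n + Pi.single i 1)).add
      (((hintegrable (n - Pi.single i 1)).const_mul (n i : ℝ)).const_mul (v i))).congr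
      (ae_of_all _ fun ω => ?_)
    simp only [Pi.add_apply _ _ ω, hexp]
    ring
  simp only [hexp]
  rw [integral_sub hintegrable_mul (((hintegrable _).const_mul _).const_mul _), hibp,
    ← Finset.add_sum_erase _ _ (Finset.mem_univ i)]
  simp only [hterm, integral_const_mul]
  rw [add_sub_cancel_left]
  exact Finset.sum_congr rfl fun j _ => by ring

theorem wickMoment_nonneg (hX : IsCenteredGaussianFamily P X)
    (hv : ∀ i, 0 < ∫ ω, X i ω * X i ω ∂P) (hR : ∀ i j, 0 ≤ ∫ ω, X i ω * X j ω ∂P) (n : ι → ℕ) :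
    0 ≤ wickMoment P X n := by
  induction hN : ∑ j, n j using Nat.strong_induction_on generalizing n with
  | _ N ih =>
    by_cases h0 : n = 0
    · subst h0
      simp [wickMoment, wick_eq_eval, wickPoly_zero]
    obtain ⟨i, hi⟩ : ∃ i, n i ≠ 0 := by
      by_contra! h
      exact h0 (funext h)
    have hn : n = (n - Pi.single i 1) + Pi.single i 1 := by
      refine (tsub_add_cancel_of_le ?_).symm
      intro k
      rcases eq_or_ne k i with rfl | hk
      · simpa using Nat.one_le_iff_ne_zero.2 hi
      · simp [hk]
    rw [hn, hX.wickMoment_add_single hv]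
    refine Finset.sum_nonneg fun j _ => mul_nonneg (mul_nonneg (by positivity) (hR i j)) ?_
    refine ih _ ?_ _ rfl
    rw [← hN]
    refine Finset.sum_lt_sum (fun k _ => ?_) ⟨i, Finset.mem_univ i, ?_⟩
    · simp only [Pi.sub_apply]; omega
    · simp only [Pi.sub_apply, Pi.single_eq_same]; omega

theorem mul_wickMoment_le (hX : IsCenteredGaussianFamily P X)
    (hv : ∀ i, 0 < ∫ ω, X i ω * X i ω ∂P) (hR : ∀ i j, 0 ≤ ∫ ω, X i ω * X j ω ∂P) (n : ι → ℕ)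
    {i j : ι} (hij : j ≠ i) :
    (∫ ω, X i ω * X j ω ∂P) * wickMoment P X n ≤
      wickMoment P X (n + (Pi.single i 1 + Pi.single j 1)) := by
  have hF := hX.wickMoment_nonneg hv hR
  rw [add_comm (Pi.single i 1), ← add_assoc, hX.wickMoment_add_single hv]
  have h := Finset.single_le_sum (f := fun l => ((n + Pi.single j 1 : ι → ℕ) l : ℝ) *
    (∫ ω, X i ω * X l ω ∂P) * wickMoment P X (n + Pi.single j 1 - Pi.single l 1))
    (fun l _ => mul_nonneg (mul_nonneg (by positivity) (hR i l)) (hF _))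
    (Finset.mem_erase.2 ⟨hij, Finset.mem_univ j⟩)
  refine le_trans ?_ h
  simp only [add_tsub_cancel_right]
  refine mul_le_mul_of_nonneg_right ?_ (hF n)
  refine le_mul_of_one_le_left (hR i j) ?_
  simp

/-- Contracting the legs along the edges `(i, σ i)` of a fixed-point-free permutation. -/
theorem pow_le_wickMoment (hX : IsCenteredGaussianFamily P X)
    (hv : ∀ i, 0 < ∫ ω, X i ω * X i ω ∂P) (hR : ∀ i j, 0 ≤ ∫ ω, X i ω * X j ω ∂P)
    {c : ℝ} (hc : 0 ≤ c) (σ : Equiv.Perm ι) (hσ : ∀ i, σ i ≠ i)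
    (hcσ : ∀ i, c ≤ ∫ ω, X i ω * X (σ i) ω ∂P) (M : ℕ) :
    c ^ (M * Fintype.card ι) ≤
      wickMoment P X (fun _ => 2 * M) := by
  have hF := hX.wickMoment_nonneg hv hR
  have hset : ∀ (n : ι → ℕ) (A : Finset ι),
      c ^ A.card * wickMoment P X n ≤
        wickMoment P X (n + ∑ i ∈ A, (Pi.single i 1 + Pi.single (σ i) 1)) := by
    intro n A
    induction A using Finset.induction_on with
    | empty => simp
    | insert i A hi ih =>
      rw [Finset.sum_insert hi, Finset.card_insert_of_notMem hi, pow_succ', mul_assoc,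
        add_comm (Pi.single i 1 + Pi.single (σ i) 1), ← add_assoc]
      refine le_trans ?_ (hX.mul_wickMoment_le hv hR _ (hσ i))
      exact mul_le_mul (hcσ i) ih (mul_nonneg (by positivity) (hF n)) (hR _ _)
  induction M with
  | zero => simp [wickMoment, wick_eq_eval, wickPoly_zero]
  | succ M ih =>
    have h := hset (fun _ => 2 * M) Finset.univ
    have hsum : (fun _ => 2 * M) + ∑ i, (Pi.single i 1 + Pi.single (σ i) 1) =
        fun _ : ι => 2 * (M + 1) := by
      ext k
      have h2 : ∑ i, (Pi.single (σ i) 1 : ι → ℕ) k = ∑ i, (Pi.single i 1 : ι → ℕ) k :=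
        Equiv.sum_comp σ fun i => (Pi.single i 1 : ι → ℕ) k
      have h1 : ∑ i, (Pi.single i 1 : ι → ℕ) k = 1 := by simp [Pi.single_apply]
      simp only [Pi.add_apply, Finset.sum_apply, Finset.sum_add_distrib, h2, h1]
      ring
    rw [hsum, Finset.card_univ] at h
    refine le_trans ?_ h
    rw [add_mul, one_mul, add_comm, pow_add]
    exact mul_le_mul_of_nonneg_left ih (by positivity)

end IsCenteredGaussianFamily

theorem Equiv.Perm.exists_forall_ne (α : Type*) [Finite α] [Nontrivial α] :
    ∃ σ : Equiv.Perm α, ∀ a, σ a ≠ a := by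
  obtain ⟨n, ⟨e⟩⟩ := Finite.exists_equiv_fin α
  have hn : 1 < n := by
    rw [← Nat.card_eq_of_equiv_fin e]
    exact Finite.one_lt_card
  obtain ⟨k, rfl⟩ := Nat.exists_eq_add_of_le' hn
  refine ⟨e.symm.permCongr (finRotate (k + 2)), fun a h => ?_⟩
  simp [Equiv.permCongr_apply, Equiv.symm_apply_eq] at h

/-- If no class of an equivalence relation on a finite type is a singleton, some fixed-point-free
permutation preserves all classes. -/
theorem Setoid.exists_perm_forall_ne {α : Type*} [Finite α] (S : Setoid α)
    (h : ∀ a, ∃ b, b ≠ a ∧ S a b) : ∃ σ : Equiv.Perm α, ∀ a, σ a ≠ a ∧ S a (σ a) := by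
  let f : α → Quotient S := Quotient.mk S
  have hnt : ∀ q : Quotient S, Nontrivial {a // f a = q} := by
    intro q
    obtain ⟨a, rfl⟩ := Quotient.exists_rep q
    obtain ⟨b, hne, hb⟩ := h a
    exact ⟨⟨⟨a, rfl⟩, ⟨b, (Quotient.sound hb).symm⟩, fun hab => hne (congrArg Subtype.val hab).symm⟩⟩
  choose τ hτ using fun q => Equiv.Perm.exists_forall_ne {a // f a = q}
  refine ⟨(Equiv.sigmaFiberEquiv f).permCongr (Equiv.sigmaCongrRight τ), fun a => ?_⟩
  have hval : (Equiv.sigmaFiberEquiv f).permCongr (Equiv.sigmaCongrRight τ) a =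
      (τ (f a) ⟨a, rfl⟩).1 := rfl
  rw [hval]
  exact ⟨fun heq => hτ (f a) ⟨a, rfl⟩ (Subtype.ext heq),
    Quotient.exact (τ (f a) ⟨a, rfl⟩).2.symm⟩

theorem anorm_nonneg {d : ℕ} (s x : Fin d → ℝ) : 0 ≤ anorm s x :=
  Finset.sum_nonneg fun _ _ => Real.rpow_nonneg (abs_nonneg _) _

theorem anorm_sub_comm {d : ℕ} (s x y : Fin d → ℝ) : anorm s (x - y) = anorm s (y - x) := by
  simp [anorm, abs_sub_comm]

theorem anorm_zero {d : ℕ} {s : Fin d → ℝ} (hs : ∀ j, 1 ≤ s j) : anorm s 0 = 0 := by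
  refine Finset.sum_eq_zero fun j _ => ?_
  have : 1 / s j ≠ 0 := (one_div_pos.2 (zero_lt_one.trans_le (hs j))).ne'
  simpa using Real.zero_rpow this

theorem anorm_add_le {d : ℕ} {s : Fin d → ℝ} (hs : ∀ j, 1 ≤ s j) (x y : Fin d → ℝ) :
    anorm s (x + y) ≤ anorm s x + anorm s y := by
  rw [anorm, anorm, anorm, ← Finset.sum_add_distrib]
  refine Finset.sum_le_sum fun j _ => ?_
  have hpos : 0 < s j := zero_lt_one.trans_le (hs j)
  calc |(x + y) j| ^ (1 / s j) ≤ (|x j| + |y j|) ^ (1 / s j) :=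
        Real.rpow_le_rpow (abs_nonneg _) (abs_add_le _ _) (by positivity)
    _ ≤ |x j| ^ (1 / s j) + |y j| ^ (1 / s j) :=
        Real.rpow_add_le_add_rpow (abs_nonneg _) (abs_nonneg _) (by positivity)
          ((div_le_one hpos).2 (hs j))

/-- Two points of a cluster at scale `δ` among `K` points are at distance at most `K * δ`. -/
theorem SameCluster.anorm_le {d K : ℕ} {s : Fin d → ℝ} (hs : ∀ j, 1 ≤ s j) {δ : ℝ} (hδ : 0 ≤ δ)
    {x : Fin K → Fin d → ℝ} {i j : Fin K} (h : SameCluster s δ x i j) :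
    anorm s (x i - x j) ≤ K * δ := by
  let G : SimpleGraph (Fin K) := SimpleGraph.fromRel fun i j => anorm s (x i - x j) ≤ δ
  have hG : ∀ k l, G.Adj k l → anorm s (x k - x l) ≤ δ := by
    intro k l hkl
    rcases ((SimpleGraph.fromRel_adj _ _ _).1 hkl).2 with h | h
    · exact h
    · rwa [anorm_sub_comm]
  have hreach : G.Reachable i j := by
    induction h with
    | refl => exact SimpleGraph.Reachable.refl _
    | @tail k l _ hkl ih =>
      rcases eq_or_ne k l with rfl | hne
      · exact ih
      · exact ih.trans
          (SimpleGraph.Adj.reachable ((SimpleGraph.fromRel_adj _ _ _).2 ⟨hne, Or.inl hkl⟩))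
  have hwalk : ∀ {k l : Fin K} (w : G.Walk k l), anorm s (x k - x l) ≤ w.length * δ := by
    intro k l w
    induction w with
    | nil => simp [anorm_zero hs]
    | @cons a b c hab w ih =>
      calc anorm s (x a - x c) = anorm s ((x a - x b) + (x b - x c)) := by rw [sub_add_sub_cancel]
        _ ≤ δ + w.length * δ := (anorm_add_le hs _ _).trans (add_le_add (hG _ _ hab) ih)
        _ = _ := by push_cast [SimpleGraph.Walk.length_cons]; ring
  obtain ⟨p, hp⟩ := hreach.exists_isPath
  have hlen := hp.length_lt
  rw [Fintype.card_fin] at hlen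
  exact (hwalk p).trans (mul_le_mul_of_nonneg_right (by exact_mod_cast hlen.le) hδ)

theorem sameCluster_equivalence {d K : ℕ} (s : Fin d → ℝ) (δ : ℝ) (x : Fin K → Fin d → ℝ) :
    Equivalence (SameCluster s δ x) where
  refl _ := Relation.ReflTransGen.refl
  symm h := by
    have : Std.Symm fun i j => anorm s (x i - x j) ≤ δ :=
      ⟨fun _ _ hij => by rwa [anorm_sub_comm]⟩
    exact Relation.ReflTransGen.stdSymm.symm _ _ h
  trans := Relation.ReflTransGen.trans

/-- lower bound (2.7): if every cluster at scale `Lε` has at least two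
elements, then `(Λ(KL+1)^α)^{−⌊(m+1)/2⌋·K} ≤ E ∏_j (X_j^{⋄m} + X_j^{⋄(m+1)})`. -/
theorem stmt16 (d : ℕ) (hd : 1 ≤ d) (s : Fin d → ℝ) (hs : ∀ j, 1 ≤ s j)
    (α Λ ε : ℝ) (hα : 0 < α) (hΛ : 1 < Λ) (hε : ε ∈ Set.Ioo (0:ℝ) 1)
    (K : ℕ) (hK : 1 ≤ K) (L : ℝ) (hL : 0 < L) (m : ℕ)
    (x : Fin K → Fin d → ℝ)
    (hclus : ∀ j, ∃ j', j' ≠ j ∧ SameCluster s (L * ε) x j j')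
    (Ω : Type) [MeasurableSpace Ω] (P : Measure Ω) [IsProbabilityMeasure P]
    (X : Fin K → Ω → ℝ) (hGauss : IsCenteredGaussianFamily P X)
    (hlow : ∀ i j, ε ^ α / (Λ * (anorm s (x i - x j) + ε) ^ α) ≤ ∫ ω, X i ω * X j ω ∂P)
    (hup : ∀ i j, (∫ ω, X i ω * X j ω ∂P) ≤ Λ * ε ^ α / (anorm s (x i - x j) + ε) ^ α) :
    (Λ * ((K : ℝ) * L + 1) ^ α) ^ (-((((m + 1) / 2 : ℕ) : ℤ) * K)) ≤
      ∫ ω, ∏ j, (wick (∫ ω', X j ω' ^ 2 ∂P) m (X j ω) +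
        wick (∫ ω', X j ω' ^ 2 ∂P) (m + 1) (X j ω)) ∂P := by
  have hε0 : 0 < ε := hε.1
  have hΛ0 : 0 < Λ := zero_lt_one.trans hΛ
  have hR : ∀ i j, 0 < ∫ ω, X i ω * X j ω ∂P := fun i j => by
    have := anorm_nonneg s (x i - x j)
    exact lt_of_lt_of_le (by positivity) (hlow i j)
  obtain ⟨σ, hσ⟩ := Setoid.exists_perm_forall_ne
    ⟨SameCluster s (L * ε) x, sameCluster_equivalence s _ x⟩ hclus
  have hedge : ∀ i, (Λ * ((K : ℝ) * L + 1) ^ α)⁻¹ ≤ ∫ ω, X i ω * X (σ i) ω ∂P := by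
    intro i
    have h0 := anorm_nonneg s (x i - x (σ i))
    have h1 : anorm s (x i - x (σ i)) ≤ K * (L * ε) :=
      SameCluster.anorm_le hs (by positivity) (hσ i).2
    refine le_trans ?_ (hlow i (σ i))
    have h2 : (anorm s (x i - x (σ i)) + ε) ^ α ≤ ((K : ℝ) * L + 1) ^ α * ε ^ α := by
      rw [← Real.mul_rpow (by positivity) hε0.le]
      exact Real.rpow_le_rpow (by positivity) (by linarith) hα.le
    rw [inv_eq_one_div, div_le_div_iff₀ (by positivity) (by positivity)]
    nlinarith [mul_le_mul_of_nonneg_left h2 hΛ0.le]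
  have hmain := hGauss.pow_le_wickMoment (fun i => hR i i) (fun i j => (hR i j).le)
    (c := (Λ * ((K : ℝ) * L + 1) ^ α)⁻¹) (by positivity) σ (fun i => (hσ i).1) hedge ((m + 1) / 2)
  rw [Fintype.card_fin, inv_pow] at hmain
  have hpow : (Λ * ((K : ℝ) * L + 1) ^ α) ^ (-((((m + 1) / 2 : ℕ) : ℤ) * K)) =
      ((Λ * ((K : ℝ) * L + 1) ^ α) ^ ((m + 1) / 2 * K))⁻¹ := by
    rw [zpow_neg, ← Nat.cast_mul, zpow_natCast]
  rw [hpow]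
  refine hmain.trans ?_
  -- Expand the product: every Wick moment is nonnegative, and one of them is the claimed one.
  have hexpand : ∫ ω, ∏ j, (wick (∫ ω', X j ω' ^ 2 ∂P) m (X j ω) +
      wick (∫ ω', X j ω' ^ 2 ∂P) (m + 1) (X j ω)) ∂P =
      ∑ A ∈ (Finset.univ : Finset (Fin K)).powerset,
        wickMoment P X (fun j => if j ∈ A then m else m + 1) := by
    simp only [Finset.prod_add, sq, wickMoment]
    rw [← integral_finsetSum _ fun A _ => hGauss.integrable_prod_wick _ _]
    congr 1
    ext ω
    refine Finset.sum_congr rfl fun A hA => ?_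
    rw [← Finset.prod_sdiff (Finset.mem_powerset.1 hA), mul_comm]
    congr 1
    · exact Finset.prod_congr rfl fun j hj => by simp [(Finset.mem_sdiff.1 hj).2]
    · exact Finset.prod_congr rfl fun j hj => by simp [hj]
  rw [hexpand]
  have hsingle := fun A => Finset.single_le_sum
    (f := fun A : Finset (Fin K) => wickMoment P X (fun j => if j ∈ A then m else m + 1))
    (fun A _ => hGauss.wickMoment_nonneg (fun i => hR i i) (fun i j => (hR i j).le) _)
    (Finset.mem_powerset.2 (Finset.subset_univ A))
  rcases Nat.even_or_odd m with hm | hm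
  · have h2 : 2 * ((m + 1) / 2) = m := by obtain ⟨k, rfl⟩ := hm; omega
    simpa [h2] using hsingle Finset.univ
  · have h2 : 2 * ((m + 1) / 2) = m + 1 := by obtain ⟨k, rfl⟩ := hm; omega
    simpa [h2] using hsingle ∅
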